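/- arXiv:1605.04575 — 2 statements merged into one kernel-verified Lean document; each statement's English description precedes it below -/
import Mathlib

section
/- Let T be a subcubic tree with γ*_e(T) = γ*_{e,f}(T) > 1. Then T does not contain a vertex u of degree 1 and a vertex w of degree 2 at distance 2 from each other. -/
/-!
On a tree the kernel `q ^ dist` is inverted, up to the factor `1 - q²`, by the matrix
`1 - q A + q² (Deg - 1)` of the Ihara–Bass formula. For `q = 1/2` its row sums are proportional to
`(3 - deg u) / 6`, a weighting under which every vertex receives weight exactly `1`; on a subcubic
tree it is nonnegative, hence feasible for the LP and for its dual. Complementary slackness forces a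
porous exponential dominating set of fractional optimal size to have `w* = 1` at every vertex of
degree less than `3`. The same matrix identity, applied to `w*`, says that the values of `w*` at
the neighbours of such a vertex `v` sum to `(3 + deg v) / 2`. A neighbour of a leaf therefore has
`w* = 2`, while a neighbour of a vertex of degree `2` has `w* ≤ 5/2 - 1`.
-/

open SimpleGraph Finset

variable {V : Type*}

/-- `(1/2)^(d-1)` for an extended natural `d`, with value `0` at `∞`. -/
noncomputable def halfPow (d : ℕ∞) : ℝ :=
  if d = ⊤ then 0 else 2 * (1 / 2 : ℝ) ^ d.toNat

/-- `(1/2)^(dist_G(u,v)-1)` using the ordinary graph distance. -/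
noncomputable def expw (G : SimpleGraph V) (u v : V) : ℝ :=
  2 * (1 / 2 : ℝ) ^ G.dist u v

/-- The modified distance `dist_{(G,D)}(u,v)`: minimum length of a path from `u` to `v`
whose only vertex in `D` is the endvertex `v` (`∞` if no such path exists). -/
noncomputable def mdist (G : SimpleGraph V) (D : Finset V) (u v : V) : ℕ∞ :=
  sInf ((fun p : G.Walk u v => (p.length : ℕ∞)) ''
    {p | p.IsPath ∧ v ∈ D ∧ ∀ w ∈ p.support, w ∈ D → w = v})

/-- `w_{(G,D)}(u)`. -/
noncomputable def wblock (G : SimpleGraph V) (D : Finset V) (u : V) : ℝ :=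
  ∑ v ∈ D, halfPow (mdist G D u v)

/-- `w*_{(G,D)}(u)`. -/
noncomputable def wstar (G : SimpleGraph V) (D : Finset V) (u : V) : ℝ :=
  ∑ v ∈ D, expw G u v

def IsExpDomSet (G : SimpleGraph V) (D : Finset V) : Prop :=
  ∀ u : V, 1 ≤ wblock G D u

def IsPorousExpDomSet (G : SimpleGraph V) (D : Finset V) : Prop :=
  ∀ u : V, 1 ≤ wstar G D u

def IsDomSet (G : SimpleGraph V) (D : Finset V) : Prop :=
  ∀ v : V, v ∉ D → ∃ u ∈ D, G.Adj u v

/-- The exponential domination number `γ_e(G)`. -/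
noncomputable def gammaE (G : SimpleGraph V) [Fintype V] : ℕ :=
  sInf {k | ∃ D : Finset V, IsExpDomSet G D ∧ D.card = k}

/-- The porous exponential domination number `γ*_e(G)`. -/
noncomputable def gammaEStar (G : SimpleGraph V) [Fintype V] : ℕ :=
  sInf {k | ∃ D : Finset V, IsPorousExpDomSet G D ∧ D.card = k}

/-- The domination number `γ(G)`. -/
noncomputable def gammaDom (G : SimpleGraph V) [Fintype V] : ℕ :=
  sInf {k | ∃ D : Finset V, IsDomSet G D ∧ D.card = k}

/-- Feasibility for the LP relaxation of porous exponential domination. -/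
def FracFeasible (G : SimpleGraph V) [Fintype V] (x : V → ℝ) : Prop :=
  (∀ u, 0 ≤ x u) ∧ ∀ v : V, 1 ≤ ∑ u : V, expw G u v * x u

/-- The fractional porous exponential domination number `γ*_{e,f}(G)`. -/
noncomputable def gammaEF (G : SimpleGraph V) [Fintype V] : ℝ :=
  sInf {s | ∃ x : V → ℝ, FracFeasible G x ∧ s = ∑ u : V, x u}

/-- A graph is subcubic if all degrees are at most `3`. -/
def Subcubic (G : SimpleGraph V) [Fintype V] [DecidableRel G.Adj] : Prop :=
  ∀ v : V, G.degree v ≤ 3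

section Acyclic

variable {G : SimpleGraph V} {u r : V}

theorem existsUnique_adj_dist_add_one_eq (hG : G.IsAcyclic) (hur : G.Reachable u r)
    (hne : u ≠ r) : ∃! t, G.Adj u t ∧ G.dist t r + 1 = G.dist u r := by
  have path_of_closer {t : V} (ht : G.Adj u t) (hd : G.dist t r + 1 = G.dist u r) :
      ∃ p : G.Walk t r, (Walk.cons ht p).IsPath := by
    obtain ⟨p, hp⟩ := (ht.symm.reachable.trans hur).exists_walk_length_eq_dist
    exact ⟨p, Walk.isPath_of_length_eq_dist _ (by rw [Walk.length_cons, hp, hd])⟩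
  apply existsUnique_of_exists_of_unique
  · obtain ⟨p, hp⟩ := hur.exists_walk_length_eq_dist
    cases p with
    | nil => exact absurd rfl hne
    | @cons _ t _ ht p =>
      have hle : G.dist t r ≤ p.length := dist_le p
      have htri := ht.diff_dist_adj (u := r)
      simp only [G.dist_comm (u := r)] at htri
      rw [Walk.length_cons] at hp
      exact ⟨t, ht, by omega⟩
  · rintro s t ⟨hs, hsr⟩ ⟨ht, htr⟩
    obtain ⟨p, hp⟩ := path_of_closer hs hsr
    obtain ⟨p', hp'⟩ := path_of_closer ht htr
    have hpaths := congrArg (fun p : G.Path u r => p.1.snd)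
      ((hG.subsingleton_path u r).elim ⟨_, hp⟩ ⟨_, hp'⟩)
    simpa using hpaths

variable {R : Type*} [CommRing R]

theorem mul_sum_neighborFinset_pow_dist_of_ne [Fintype (G.neighborSet u)] (hG : G.IsAcyclic)
    (hur : G.Reachable u r) (hne : u ≠ r) (q : R) :
    q * ∑ t ∈ G.neighborFinset u, q ^ G.dist t r =
      (1 + q ^ 2 * (G.degree u - 1)) * q ^ G.dist u r := by
  classical
  obtain ⟨s, ⟨hus, hsr⟩, hunique⟩ := existsUnique_adj_dist_add_one_eq hG hur hne
  have hs : s ∈ G.neighborFinset u := (mem_neighborFinset ..).2 hus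
  have farther : ∀ t ∈ (G.neighborFinset u).erase s, q ^ G.dist t r = q ^ (G.dist u r + 1) := by
    intro t ht
    obtain ⟨hts, hut⟩ := mem_erase.1 ht
    rw [mem_neighborFinset] at hut
    have hstep := hG.dist_eq_dist_add_one_of_adj_of_reachable r hut hur.symm
    simp only [G.dist_comm (u := r)] at hstep
    have hnot : G.dist t r + 1 ≠ G.dist u r := fun h => hts (hunique t ⟨hut, h⟩)
    congr 1
    omega
  have hcard : (#((G.neighborFinset u).erase s) : R) = G.degree u - 1 := by
    rw [← card_neighborFinset_eq_degree, ← card_erase_add_one hs, Nat.cast_succ,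
      add_sub_cancel_right]
  rw [← add_sum_erase _ _ hs, sum_congr rfl farther, sum_const, nsmul_eq_mul, hcard, ← hsr]
  ring

theorem sum_neighborFinset_pow_dist_self [Fintype (G.neighborSet r)] (q : R) :
    ∑ t ∈ G.neighborFinset r, q ^ G.dist t r = G.degree r * q := by
  have adjacent : ∀ t ∈ G.neighborFinset r, q ^ G.dist t r = q := fun t ht => by
    rw [dist_eq_one_iff_adj.2 ((mem_neighborFinset ..).1 ht).symm, pow_one]
  rw [sum_congr rfl adjacent, sum_const, nsmul_eq_mul, card_neighborFinset_eq_degree]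

theorem mul_sum_neighborFinset_pow_dist [DecidableEq V] [Fintype (G.neighborSet u)]
    (hG : G.IsAcyclic) (hur : G.Reachable u r) (q : R) :
    q * ∑ t ∈ G.neighborFinset u, q ^ G.dist t r =
      (1 + q ^ 2 * (G.degree u - 1)) * q ^ G.dist u r - if u = r then 1 - q ^ 2 else 0 := by
  split_ifs with h
  · subst h
    rw [sum_neighborFinset_pow_dist_self, dist_self]
    ring
  · rw [mul_sum_neighborFinset_pow_dist_of_ne hG hur h, sub_zero]

end Acyclic

section Fintype

variable [Fintype V] {G : SimpleGraph V} [DecidableRel G.Adj]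

variable (G) in
theorem sum_sum_neighborFinset {M : Type*} [AddCommMonoid M] (f : V → M) :
    ∑ u, ∑ t ∈ G.neighborFinset u, f t = ∑ t, G.degree t • f t := by
  rw [sum_comm' (t' := univ) (s' := fun t => G.neighborFinset t) (by simp [adj_comm])]
  simp only [sum_const, card_neighborFinset_eq_degree]

theorem sum_mul_pow_dist {R : Type*} [CommRing R] (hG : G.IsTree) (q : R) (r : V) :
    ∑ u, (1 - q * G.degree u + q ^ 2 * (G.degree u - 1)) * q ^ G.dist u r = 1 - q ^ 2 := by
  classical
  have hsum : ∑ u, q * ∑ t ∈ G.neighborFinset u, q ^ G.dist t r =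
      ∑ u, q * G.degree u * q ^ G.dist u r := by
    rw [← mul_sum, sum_sum_neighborFinset, mul_sum]
    simp only [nsmul_eq_mul, mul_assoc]
  simp only [mul_sum_neighborFinset_pow_dist hG.isAcyclic (hG.connected.preconnected _ r),
    sum_sub_distrib, sum_ite_eq', mem_univ, if_true] at hsum
  rw [sub_eq_iff_eq_add, ← sub_eq_iff_eq_add', ← sum_sub_distrib] at hsum
  rw [← hsum]
  exact sum_congr rfl fun u _ => by ring

end Fintype

section Porous

theorem expw_nonneg (G : SimpleGraph V) (u v : V) : 0 ≤ expw G u v := by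
  unfold expw
  positivity

theorem expw_self (G : SimpleGraph V) (u : V) : expw G u u = 2 := by
  simp [expw]

variable {G : SimpleGraph V} {D : Finset V} {u : V}

theorem two_le_wstar_of_mem (hu : u ∈ D) : 2 ≤ wstar G D u :=
  (expw_self G u).symm.trans_le (single_le_sum (fun v _ => expw_nonneg G u v) hu)

theorem sum_neighborFinset_expw [Fintype (G.neighborSet u)] (hG : G.IsAcyclic) {r : V}
    (hur : G.Reachable u r) (hne : u ≠ r) :
    ∑ t ∈ G.neighborFinset u, expw G t r = (3 + G.degree u) / 2 * expw G u r := by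
  have h := mul_sum_neighborFinset_pow_dist_of_ne hG hur hne (1 / 2 : ℝ)
  simp only [expw, ← mul_sum]
  linear_combination 4 * h

theorem sum_neighborFinset_wstar [Fintype (G.neighborSet u)] (hG : G.IsTree) (hu : u ∉ D) :
    ∑ t ∈ G.neighborFinset u, wstar G D t = (3 + G.degree u) / 2 * wstar G D u := by
  unfold wstar
  rw [sum_comm, mul_sum]
  exact sum_congr rfl fun r hr => sum_neighborFinset_expw hG.isAcyclic
    (hG.connected.preconnected u r) (ne_of_mem_of_not_mem hr hu).symm

theorem isPorousExpDomSet_univ [Fintype V] (G : SimpleGraph V) : IsPorousExpDomSet G univ :=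
  fun u => one_le_two.trans (two_le_wstar_of_mem (mem_univ u))

theorem exists_isPorousExpDomSet_card_eq_gammaEStar [Fintype V] (G : SimpleGraph V) :
    ∃ D : Finset V, IsPorousExpDomSet G D ∧ #D = gammaEStar G :=
  Nat.sInf_mem (s := {k | ∃ D : Finset V, IsPorousExpDomSet G D ∧ #D = k})
    ⟨_, univ, isPorousExpDomSet_univ G, rfl⟩

end Porous

section Fractional

variable [Fintype V] {G : SimpleGraph V} {D : Finset V} {y : V → ℝ}

theorem gammaEF_le_sum (hy : FracFeasible G y) : gammaEF G ≤ ∑ u, y u := by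
  refine csInf_le ⟨0, ?_⟩ ⟨y, hy, rfl⟩
  rintro _ ⟨x, hx, rfl⟩
  exact sum_nonneg fun u _ => hx.1 u

theorem sum_wstar_mul (D : Finset V) (hy : ∀ v, ∑ u, expw G u v * y u = 1) :
    ∑ u, wstar G D u * y u = #D := by
  simp only [wstar, sum_mul]
  rw [sum_comm]
  simp only [hy, sum_const, nsmul_eq_mul, mul_one]

-- Complementary slackness, with `y` in the role of an optimal dual solution.
theorem wstar_eq_one_of_card_le_gammaEF (hy_nonneg : ∀ u, 0 ≤ y u)
    (hy : ∀ v, ∑ u, expw G u v * y u = 1) (hD : IsPorousExpDomSet G D)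
    (hcard : #D ≤ gammaEF G) {u : V} (hu : y u ≠ 0) : wstar G D u = 1 := by
  have slack_nonneg : ∀ v ∈ univ, 0 ≤ (wstar G D v - 1) * y v := fun v _ =>
    mul_nonneg (sub_nonneg.2 (hD v)) (hy_nonneg v)
  have slack_sum : ∑ v, (wstar G D v - 1) * y v ≤ 0 := by
    simp only [sub_one_mul, sum_sub_distrib, sum_wstar_mul D hy]
    exact sub_nonpos.2 (hcard.trans (gammaEF_le_sum ⟨hy_nonneg, fun v => (hy v).ge⟩))
  have slack_eq_zero := (sum_eq_zero_iff_of_nonneg slack_nonneg).1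
    (slack_sum.antisymm (sum_nonneg slack_nonneg)) u (mem_univ u)
  exact sub_eq_zero.1 ((mul_eq_zero.1 slack_eq_zero).resolve_right hu)

end Fractional

/-- The fractional weighting `(3 - deg u) / 6`, the exact solution of the constraints of the
linear program on a tree. -/
noncomputable def degreeDeficit (G : SimpleGraph V) [G.LocallyFinite] (u : V) : ℝ :=
  (3 - G.degree u) / 6

section Subcubic

variable [Fintype V] {G : SimpleGraph V} [DecidableRel G.Adj] {D : Finset V} {v w : V}

theorem sum_expw_mul_degreeDeficit (hG : G.IsTree) (v : V) :
    ∑ u, expw G u v * degreeDeficit G u = 1 := by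
  have h := sum_mul_pow_dist hG (1 / 2 : ℝ) v
  calc ∑ u, expw G u v * degreeDeficit G u
      = 4 / 3 * ∑ u, (1 - 1 / 2 * G.degree u + (1 / 2) ^ 2 * (G.degree u - 1)) *
          (1 / 2 : ℝ) ^ G.dist u v := by
        rw [mul_sum]
        exact sum_congr rfl fun u _ => by rw [expw, degreeDeficit]; ring
    _ = 1 := by rw [h]; norm_num

theorem Subcubic.degreeDeficit_nonneg (hsub : Subcubic G) (u : V) : 0 ≤ degreeDeficit G u := by
  have : (G.degree u : ℝ) ≤ 3 := mod_cast hsub u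
  unfold degreeDeficit
  linarith

theorem degreeDeficit_ne_zero_of_degree_lt (hv : G.degree v < 3) : degreeDeficit G v ≠ 0 := by
  have : (G.degree v : ℝ) < 3 := mod_cast hv
  unfold degreeDeficit
  linarith

theorem wstar_eq_one_of_degree_lt (hG : G.IsTree) (hsub : Subcubic G)
    (hD : IsPorousExpDomSet G D) (hcard : #D ≤ gammaEF G) (hv : G.degree v < 3) :
    wstar G D v = 1 :=
  wstar_eq_one_of_card_le_gammaEF hsub.degreeDeficit_nonneg (sum_expw_mul_degreeDeficit hG) hD
    hcard (degreeDeficit_ne_zero_of_degree_lt hv)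

theorem sum_neighborFinset_wstar_of_degree_lt (hG : G.IsTree) (hsub : Subcubic G)
    (hD : IsPorousExpDomSet G D) (hcard : #D ≤ gammaEF G) (hv : G.degree v < 3) :
    ∑ t ∈ G.neighborFinset v, wstar G D t = (3 + G.degree v) / 2 := by
  have tight := wstar_eq_one_of_degree_lt hG hsub hD hcard hv
  have hvD : v ∉ D := fun h => by linarith [two_le_wstar_of_mem (G := G) h]
  rw [sum_neighborFinset_wstar hG hvD, tight, mul_one]

theorem wstar_eq_two_of_adj_of_degree_eq_one (hG : G.IsTree) (hsub : Subcubic G)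
    (hD : IsPorousExpDomSet G D) (hcard : #D ≤ gammaEF G) (hv : G.degree v = 1)
    (hvw : G.Adj v w) : wstar G D w = 2 := by
  have hsum := sum_neighborFinset_wstar_of_degree_lt hG hsub hD hcard (v := v) (by omega)
  obtain ⟨t, ht⟩ := card_eq_one.1 ((G.card_neighborFinset_eq_degree v).trans hv)
  obtain rfl : w = t := by rwa [← mem_neighborFinset, ht, mem_singleton] at hvw
  rw [ht, sum_singleton, hv] at hsum
  norm_num [hsum]

theorem wstar_le_of_adj_of_degree_lt (hG : G.IsTree) (hsub : Subcubic G)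
    (hD : IsPorousExpDomSet G D) (hcard : #D ≤ gammaEF G) (hv : G.degree v < 3)
    (hvw : G.Adj v w) : wstar G D w ≤ (5 - G.degree v) / 2 := by
  classical
  have hw : w ∈ G.neighborFinset v := (mem_neighborFinset ..).2 hvw
  have hsum := sum_neighborFinset_wstar_of_degree_lt hG hsub hD hcard hv
  have hothers : (#((G.neighborFinset v).erase w) : ℝ) ≤
      ∑ t ∈ (G.neighborFinset v).erase w, wstar G D t := by
    simpa using card_nsmul_le_sum _ _ 1 fun t _ => hD t
  have hdeg : (#((G.neighborFinset v).erase w) : ℝ) + 1 = G.degree v := by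
    rw [← card_neighborFinset_eq_degree]
    exact_mod_cast card_erase_add_one hw
  rw [← add_sum_erase _ _ hw] at hsum
  linarith

end Subcubic

/-- If `T` is a subcubic tree with `γ*_e(T) = γ*_{e,f}(T) > 1`, then `T` does not contain a
vertex of degree 1 and a vertex of degree 2 at distance 2 from each other. -/
theorem stmt_9 {V : Type*} [Fintype V] (G : SimpleGraph V) [DecidableRel G.Adj]
    (hT : G.IsTree) (hsub : Subcubic G)
    (heq : (gammaEStar G : ℝ) = gammaEF G) (hgt : 1 < gammaEStar G) :
    ¬ ∃ u w : V, G.degree u = 1 ∧ G.degree w = 2 ∧ G.dist u w = 2 := by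
  rintro ⟨u, w, hu, hw, huw⟩
  obtain ⟨D, hD, hDcard⟩ := exists_isPorousExpDomSet_card_eq_gammaEStar G
  have hcard : #D ≤ gammaEF G := by rw [hDcard, heq]
  obtain ⟨v, huv, hwv⟩ : (G.commonNeighbors u w).Nonempty := by
    have hedist : G.edist u w = 2 := by
      rw [← (hT.connected.preconnected u w).coe_dist_eq_edist, huw, Nat.cast_ofNat]
    exact (edist_eq_two_iff.1 hedist).2.2
  have near_leaf : wstar G D v = 2 :=
    wstar_eq_two_of_adj_of_degree_eq_one hT hsub hD hcard hu huv
  have near_deg_two : wstar G D v ≤ (5 - G.degree w) / 2 :=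
    wstar_le_of_adj_of_degree_lt hT hsub hD hcard (by omega) hwv
  rw [near_leaf, hw] at near_deg_two
  norm_num at near_deg_two
end

section
/- Let G be a subcubic graph, D ⊆ V(G), and let u be a vertex of degree at most 2 in G. Then w_{(G,D)}(u) ≤ 2, with equality if and only if u is contained in a subgraph T of G that is a tree such that rooting T at u yields a full binary tree and D ∩ V(T) is exactly the set of leaves of T. -/
open SimpleGraph Finset

variable {V : Type*}

/-- `u` lies in a subgraph `H` of `G` that is a tree such that rooting `H` at `u` yields a full
binary tree whose set of leaves is exactly `D ∩ V(H)`.  (In an unrooted formulation: the root `u`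
has degree `0` or `2`, every other vertex has degree `1` or `3`, and the leaves are the vertices
with no child, i.e. the non-root vertices of degree `1`, together with `u` if it has degree `0`.) -/
def IsFullBinaryWitness {V : Type*} (G : SimpleGraph V) (D : Finset V) (u : V) : Prop :=
  ∃ H : G.Subgraph, u ∈ H.verts ∧ H.verts.Finite ∧ H.coe.IsTree ∧
    ((H.neighborSet u).ncard = 0 ∨ (H.neighborSet u).ncard = 2) ∧
    (∀ v ∈ H.verts, v ≠ u → (H.neighborSet v).ncard = 1 ∨ (H.neighborSet v).ncard = 3) ∧
    (↑D ∩ H.verts =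
      {v | v ∈ H.verts ∧ (H.neighborSet v).ncard ≤ 1 ∧
        (v = u → (H.neighborSet v).ncard = 0)})

/-!
Search `G` from `u` without proceeding beyond `D`. Every vertex has at most two children, since
`u` has degree at most two and any other vertex spends one of its three edges on a parent. Hence the
depths `d` of the vertices of `D` that are found satisfy Kraft's inequality `∑ (1/2) ^ d ≤ 1`, and
`wblock G D u` is twice this sum. Equality holds exactly when every vertex outside `D` has two
children, every vertex other than `u` has a single parent, and the search ends, that is, when the
search itself traverses a full binary tree whose leaves are its vertices in `D`. Conversely, by the
same criterion a full binary tree has weight `2`, and passing from a subgraph to `G` does not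
decrease the weight.
-/

open Filter

section Rank

variable {G : SimpleGraph V} {α : Type*}

lemma connected_of_exists_adj_lt [Preorder α] [WellFoundedLT α] (f : V → α) (u : V)
    (h : ∀ v, v ≠ u → ∃ w, G.Adj v w ∧ f w < f v) : G.Connected := by
  have reachable_root (v : V) : G.Reachable v u := by
    induction v using (InvImage.wf f wellFounded_lt).induction with
    | _ v ih =>
      by_cases hv : v = u
      · rw [hv]
      · obtain ⟨w, hvw, hlt⟩ := h v hv
        exact hvw.reachable.trans (ih w hlt)
  have : Nonempty V := ⟨u⟩
  exact ⟨fun v w ↦ (reachable_root v).trans (reachable_root w).symm⟩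

/-- A vertex of maximal rank on a cycle would have two neighbours of at most its own rank. -/
lemma isAcyclic_of_subsingleton_adj_le [LinearOrder α] (f : V → α)
    (h : ∀ v, {w | G.Adj v w ∧ f w ≤ f v}.Subsingleton) : G.IsAcyclic := by
  classical
  intro x c hc
  obtain ⟨v, hv, hmax⟩ := c.support.toFinset.exists_max_image f ⟨x, by simp⟩
  rw [List.mem_toFinset] at hv
  have hcycle : (c.rotate v hv).IsCycle := hc.rotate hv
  have rank_le (i : ℕ) : f ((c.rotate v hv).getVert i) ≤ f v :=
    hmax _ (List.mem_toFinset.2 <|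
      (c.mem_support_rotate_iff v hv).1 (Walk.getVert_mem_support _ i))
  exact hcycle.snd_ne_penultimate <| h v
    ⟨Walk.adj_snd hcycle.not_nil, rank_le _⟩
    ⟨(Walk.adj_penultimate hcycle.not_nil).symm, rank_le _⟩

end Rank

section Counting

lemma card_mul_eq_card_mul_iff_of_le {α β : Type*} {r : α → β → Prop} [∀ a b, Decidable (r a b)]
    {s : Finset α} {t : Finset β} {m n : ℕ} (hm : ∀ a ∈ s, #(t.bipartiteAbove r a) ≤ m)
    (hn : ∀ b ∈ t, n ≤ #(s.bipartiteBelow r b)) :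
    #t * n = #s * m ↔
      (∀ a ∈ s, #(t.bipartiteAbove r a) = m) ∧ ∀ b ∈ t, #(s.bipartiteBelow r b) = n := by
  have hcount := sum_card_bipartiteAbove_eq_sum_card_bipartiteBelow (s := s) (t := t) r
  have hs := sum_le_card_nsmul _ _ _ hm
  have ht := card_nsmul_le_sum _ _ _ hn
  simp only [smul_eq_mul] at hs ht
  constructor
  · intro heq
    refine ⟨(sum_eq_sum_iff_of_le hm).1 ?_, fun b hb ↦ ((sum_eq_sum_iff_of_le hn).1 ?_ b hb).symm⟩
    all_goals simp only [sum_const, smul_eq_mul]; omega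
  · rintro ⟨hs, ht⟩
    simpa only [sum_congr rfl hs, sum_congr rfl ht, sum_const, smul_eq_mul, eq_comm] using hcount

/-- The Kraft identity: `a n` and `b n` count the leaves and the internal nodes at depth `n` of a
rooted forest, and `2 * b n - (a (n + 1) + b (n + 1))` the missing children at depth `n + 1`. -/
lemma kraft_identity (a b : ℕ → ℝ) (N : ℕ) :
    ∑ n ∈ range N, a n * (1 / 2) ^ n + (a N + b N) * (1 / 2) ^ N
      + ∑ n ∈ range N, (2 * b n - (a (n + 1) + b (n + 1))) * (1 / 2) ^ (n + 1) = a 0 + b 0 := by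
  induction N with
  | zero => simp
  | succ N ih => rw [sum_range_succ, sum_range_succ, ← ih]; ring

end Counting

section HalfPow

lemma halfPow_nonneg (d : ℕ∞) : 0 ≤ halfPow d := by
  unfold halfPow
  split_ifs <;> positivity

lemma halfPow_antitone : Antitone halfPow := by
  intro d e h
  by_cases he : e = ⊤
  · simpa only [halfPow, he, if_true] using halfPow_nonneg d
  · rw [halfPow, halfPow, if_neg he, if_neg (ne_top_of_le_ne_top he h)]
    gcongr 2 * ?_
    exact pow_le_pow_of_le_one (by norm_num) (by norm_num) (ENat.toNat_le_toNat h he)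

lemma halfPow_eq_sum_range {d : ℕ∞} {N : ℕ} (h : d ≠ ⊤ → d < N) :
    halfPow d = 2 * ∑ n ∈ range N, if d = n then (1 / 2 : ℝ) ^ n else 0 := by
  cases d with
  | top => simp [halfPow]
  | coe k =>
    have hk : k < N := by simpa using h
    simp [halfPow, hk]

end HalfPow

section AvoidingDist

variable {G : SimpleGraph V} {D : Finset V} {u v w x : V}

/-- The paths admissible in `dist_{(G,D)}`, except that the end vertex need not belong to `D`. -/
def IsAvoiding (D : Finset V) (p : G.Walk u v) : Prop :=
  p.IsPath ∧ ∀ w ∈ p.support, w ∈ D → w = v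

/-- The modified distance `dist_{(G,D)}(u,v)`, extended to end vertices `v` outside `D`, so that it
becomes the depth of `v` in a search from `u` that does not proceed beyond the vertices of `D`. -/
noncomputable def avoidingDist (G : SimpleGraph V) (D : Finset V) (u v : V) : ℕ∞ :=
  ⨅ p : {p : G.Walk u v // IsAvoiding D p}, (p.1.length : ℕ∞)

lemma mdist_eq_avoidingDist (hv : v ∈ D) : mdist G D u v = avoidingDist G D u v := by
  simp [mdist, avoidingDist, sInf_image, iInf_subtype, IsAvoiding, hv]

lemma IsAvoiding.avoidingDist_le {p : G.Walk u v} (hp : IsAvoiding D p) :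
    avoidingDist G D u v ≤ p.length :=
  iInf_le (fun p : {p : G.Walk u v // IsAvoiding D p} ↦ (p.1.length : ℕ∞)) ⟨p, hp⟩

lemma exists_isAvoiding_length_eq (h : avoidingDist G D u v ≠ ⊤) :
    ∃ p : G.Walk u v, IsAvoiding D p ∧ p.length = avoidingDist G D u v := by
  have : Nonempty {p : G.Walk u v // IsAvoiding D p} := by
    by_contra hempty
    rw [not_nonempty_iff] at hempty
    exact h (iInf_of_empty _)
  obtain ⟨p, hp⟩ := ciInf_mem fun p : {p : G.Walk u v // IsAvoiding D p} ↦ (p.1.length : ℕ∞)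
  exact ⟨p.1, p.2, hp⟩

lemma IsAvoiding.takeUntil [DecidableEq V] {p : G.Walk u v} (hp : IsAvoiding D p)
    (hx : x ∈ p.support) : IsAvoiding D (p.takeUntil x hx) := by
  refine ⟨hp.1.takeUntil hx, fun w hw hwD ↦ ?_⟩
  obtain rfl := hp.2 w (p.support_takeUntil_subset_support hx hw) hwD
  by_contra hne
  exact Walk.endpoint_notMem_support_takeUntil hp.1 hx hne hw

lemma avoidingDist_self : avoidingDist G D u u = 0 := by
  have hnil : IsAvoiding D (Walk.nil : G.Walk u u) := ⟨.nil, by simp⟩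
  simpa using hnil.avoidingDist_le

lemma avoidingDist_eq_zero_iff : avoidingDist G D u v = 0 ↔ v = u := by
  refine ⟨fun h ↦ ?_, fun h ↦ h ▸ avoidingDist_self⟩
  obtain ⟨p, -, hp⟩ := exists_isAvoiding_length_eq (h.trans_ne ENat.zero_ne_top)
  rw [h, Nat.cast_eq_zero] at hp
  exact (Walk.eq_of_length_eq_zero hp).symm

lemma avoidingDist_le_add_one (hv : v ∉ D) (hvw : G.Adj v w) :
    avoidingDist G D u w ≤ avoidingDist G D u v + 1 := by
  classical
  by_cases hfin : avoidingDist G D u v = ⊤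
  · simp [hfin]
  obtain ⟨p, hp, hlen⟩ := exists_isAvoiding_length_eq hfin
  have notMem_of_mem (x : V) (hx : x ∈ p.support) (hxD : x ∈ D) : False := hv (hp.2 x hx hxD ▸ hxD)
  have hpw : IsAvoiding D (p.concat hvw).bypass := by
    refine ⟨Walk.bypass_isPath _, fun x hx hxD ↦ ?_⟩
    have hx' := Walk.support_bypass_subset_support _ hx
    rw [Walk.support_concat, List.mem_append, List.mem_singleton] at hx'
    exact hx'.resolve_left fun hx' ↦ notMem_of_mem x hx' hxD
  calc avoidingDist G D u w ≤ (p.concat hvw).bypass.length := hpw.avoidingDist_le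
    _ ≤ (p.concat hvw).length := by exact_mod_cast Walk.length_bypass_le_length _
    _ = avoidingDist G D u v + 1 := by rw [Walk.length_concat, Nat.cast_succ, hlen]

lemma avoidingDist_lt_of_mem_support {p : G.Walk u v} (hp : IsAvoiding D p)
    (hlen : p.length = avoidingDist G D u v) (hx : x ∈ p.support) (hne : x ≠ v) :
    avoidingDist G D u x < avoidingDist G D u v := by
  classical
  calc avoidingDist G D u x ≤ (p.takeUntil x hx).length := (hp.takeUntil hx).avoidingDist_le
    _ < p.length := by exact_mod_cast Walk.length_takeUntil_lt_length hx hne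
    _ = avoidingDist G D u v := hlen

lemma eventually_avoidingDist_lt (G : SimpleGraph V) (D : Finset V) (u : V) {s : Set V}
    (hs : s.Finite) :
    ∀ᶠ N : ℕ in atTop, ∀ v ∈ s, avoidingDist G D u v ≠ ⊤ → avoidingDist G D u v < N := by
  refine (eventually_all_finite hs).2 fun v _ ↦ ?_
  filter_upwards [eventually_gt_atTop (avoidingDist G D u v).toNat] with N hN hfin
  rw [← ENat.natCast_toNat hfin]
  exact_mod_cast hN

lemma subsingleton_adj_avoidingDist_le (hG : G.IsAcyclic) (hv : avoidingDist G D u v ≠ ⊤) :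
    {w | G.Adj v w ∧ avoidingDist G D u w ≤ avoidingDist G D u v}.Subsingleton := by
  obtain ⟨p, hp, -⟩ := exists_isAvoiding_length_eq hv
  suffices ∀ w, G.Adj v w → avoidingDist G D u w ≤ avoidingDist G D u v → w = p.penultimate from
    fun w hw w' hw' ↦ (this w hw.1 hw.2).trans (this w' hw'.1 hw'.2).symm
  intro w hvw hle
  obtain ⟨q, hq, hlen⟩ := exists_isAvoiding_length_eq (ne_top_of_le_ne_top hv hle)
  have hvq : v ∉ q.support := fun hvq ↦
    (avoidingDist_lt_of_mem_support hq hlen hvq hvw.ne).not_ge hle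
  exact hG.eq_penultimate_of_adj_end hp.1 hvw
    (hG.mem_support_of_ne_mem_support_of_adj_of_isPath hp.1 hq.1 hvw hvq)

/-- `v` precedes `w` on a shortest admissible path from `u`, in the sense of `avoidingDist`. -/
def IsParent (G : SimpleGraph V) (D : Finset V) (u v w : V) : Prop :=
  v ∉ D ∧ G.Adj v w ∧ avoidingDist G D u v < avoidingDist G D u w

lemma IsParent.avoidingDist_eq (h : IsParent G D u v w) :
    avoidingDist G D u w = avoidingDist G D u v + 1 :=
  (avoidingDist_le_add_one h.1 h.2.1).antisymm (Order.add_one_le_of_lt h.2.2)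

lemma IsParent.avoidingDist_left_ne_top (h : IsParent G D u v w) : avoidingDist G D u v ≠ ⊤ :=
  h.2.2.ne_top

lemma IsParent.avoidingDist_right_ne_top (h : IsParent G D u v w) : avoidingDist G D u w ≠ ⊤ := by
  simpa [h.avoidingDist_eq] using h.avoidingDist_left_ne_top

lemma exists_isParent (hw : avoidingDist G D u w ≠ ⊤) (hwu : w ≠ u) : ∃ v, IsParent G D u v w := by
  obtain ⟨p, hp, hlen⟩ := exists_isAvoiding_length_eq hw
  have hadj : G.Adj p.penultimate w := Walk.adj_penultimate (Walk.not_nil_of_ne hwu.symm)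
  have hmem : p.penultimate ∈ p.support := p.getVert_mem_support _
  exact ⟨p.penultimate, fun hD ↦ hadj.ne (hp.2 _ hmem hD), hadj,
    avoidingDist_lt_of_mem_support hp hlen hmem hadj.ne⟩

end AvoidingDist

section Search

variable {G : SimpleGraph V} [G.LocallyFinite] {D : Finset V} {u v : V} {n : ℕ}

open scoped Classical in
/-- The vertices `w` such that `v` is a parent of `w`. -/
noncomputable def children (G : SimpleGraph V) [G.LocallyFinite] (D : Finset V) (u v : V) :
    Finset V :=
  {w ∈ G.neighborFinset v | IsParent G D u v w}

open scoped Classical in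
/-- The parents of `v`; there may be several, as `v` may lie on several shortest paths. -/
noncomputable def parents (G : SimpleGraph V) [G.LocallyFinite] (D : Finset V) (u v : V) :
    Finset V :=
  {w ∈ G.neighborFinset v | IsParent G D u w v}

lemma mem_children {w : V} : w ∈ children G D u v ↔ IsParent G D u v w := by
  simpa [children] using fun h : IsParent G D u v w ↦ h.2.1

lemma mem_parents {w : V} : w ∈ parents G D u v ↔ IsParent G D u w v := by
  simpa [parents] using fun h : IsParent G D u w v ↦ h.2.1.symm

lemma children_eq_empty (hv : v ∈ D) : children G D u v = ∅ :=
  eq_empty_of_forall_notMem fun _ hw ↦ (mem_children.1 hw).1 hv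

lemma parents_self : parents G D u u = ∅ :=
  eq_empty_of_forall_notMem fun _ hw ↦ by simpa [avoidingDist_self] using (mem_parents.1 hw).2.2

lemma parents_nonempty (hv : avoidingDist G D u v ≠ ⊤) (hvu : v ≠ u) :
    (parents G D u v).Nonempty :=
  (exists_isParent hv hvu).imp fun _ ↦ mem_parents.2

lemma disjoint_children_parents : Disjoint (children G D u v) (parents G D u v) :=
  disjoint_left.2 fun _ hc hp ↦ (mem_children.1 hc).2.2.asymm (mem_parents.1 hp).2.2

lemma card_children_add_card_parents_le_degree :
    #(children G D u v) + #(parents G D u v) ≤ G.degree v := by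
  classical
  rw [← card_union_of_disjoint disjoint_children_parents]
  exact card_le_card (union_subset (filter_subset _ _) (filter_subset _ _))

lemma card_children_add_card_parents_eq_degree (hG : G.IsAcyclic)
    (hv : avoidingDist G D u v ≠ ⊤) (hvD : v ∉ D) :
    #(children G D u v) + #(parents G D u v) = G.degree v := by
  classical
  refine card_children_add_card_parents_le_degree.antisymm ?_
  rw [← card_union_of_disjoint disjoint_children_parents]
  refine card_le_card fun w hw ↦ ?_
  rw [mem_neighborFinset] at hw
  rw [mem_union, mem_children, mem_parents]
  refine (lt_or_ge (avoidingDist G D u v) (avoidingDist G D u w)).imp (⟨hvD, hw, ·⟩) fun hle ↦ ?_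
  have hvu : v ≠ u := by
    rintro rfl
    rw [avoidingDist_self, nonpos_iff_eq_zero, avoidingDist_eq_zero_iff] at hle
    exact hw.ne hle.symm
  obtain ⟨x, hx⟩ := exists_isParent hv hvu
  obtain rfl := subsingleton_adj_avoidingDist_le hG hv ⟨hw, hle⟩ ⟨hx.2.1.symm, hx.2.2.le⟩
  exact hx

lemma card_children_le_two (hsub : ∀ v, G.degree v ≤ 3) (hu : G.degree u ≤ 2)
    (hv : avoidingDist G D u v ≠ ⊤) : #(children G D u v) ≤ 2 := by
  have hdeg := card_children_add_card_parents_le_degree (G := G) (D := D) (u := u) (v := v)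
  by_cases hvu : v = u
  · subst hvu
    omega
  · have := (parents_nonempty hv hvu).card_pos
    have := hsub v
    omega

lemma finite_setOf_avoidingDist_eq (G : SimpleGraph V) [G.LocallyFinite] (D : Finset V) (u : V)
    (n : ℕ) : {v | avoidingDist G D u v = n}.Finite := by
  induction n with
  | zero => simp [avoidingDist_eq_zero_iff]
  | succ n ih =>
    refine (ih.biUnion fun v _ ↦ (children G D u v).finite_toSet).subset fun w hw ↦ ?_
    have hw : avoidingDist G D u w = (n + 1 : ℕ) := hw
    have hwu : w ≠ u := by
      rw [Ne, ← avoidingDist_eq_zero_iff (G := G) (D := D), hw]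
      exact_mod_cast n.succ_ne_zero
    obtain ⟨v, hv⟩ := exists_isParent (hw.trans_ne (ENat.natCast_ne_top _)) hwu
    have hvn : avoidingDist G D u v = n := by
      simpa [hv.avoidingDist_eq] using hw
    exact Set.mem_biUnion (show v ∈ {v | avoidingDist G D u v = n} from hvn) (mem_children.2 hv)

/-- The vertices at depth `n` of the search from `u` that stops at `D`. -/
noncomputable def layer (G : SimpleGraph V) [G.LocallyFinite] (D : Finset V) (u : V) (n : ℕ) :
    Finset V :=
  (finite_setOf_avoidingDist_eq G D u n).toFinset

open scoped Classical in
/-- The vertices at depth `n` at which the search from `u` does not stop. -/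
noncomputable def innerLayer (G : SimpleGraph V) [G.LocallyFinite] (D : Finset V) (u : V) (n : ℕ) :
    Finset V :=
  {v ∈ layer G D u n | v ∉ D}

lemma mem_layer : v ∈ layer G D u n ↔ avoidingDist G D u v = n := by
  simp [layer]

lemma mem_innerLayer : v ∈ innerLayer G D u n ↔ avoidingDist G D u v = n ∧ v ∉ D := by
  simp [innerLayer, mem_layer]

lemma avoidingDist_ne_top_of_mem_layer (hv : v ∈ layer G D u n) :
    avoidingDist G D u v ≠ ⊤ :=
  (mem_layer.1 hv).trans_ne (ENat.natCast_ne_top n)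

lemma exists_mem_layer (hv : avoidingDist G D u v ≠ ⊤) : ∃ n, v ∈ layer G D u n :=
  (ENat.ne_top_iff_exists.1 hv).imp fun _ hn ↦ mem_layer.2 hn.symm

lemma ne_of_mem_layer_succ (hv : v ∈ layer G D u (n + 1)) : v ≠ u := by
  rw [Ne, ← avoidingDist_eq_zero_iff (G := G) (D := D), mem_layer.1 hv]
  exact_mod_cast n.succ_ne_zero

lemma layer_zero : layer G D u 0 = {u} := by
  ext v
  simp [mem_layer, avoidingDist_eq_zero_iff]

open scoped Classical in
lemma bipartiteAbove_layer_succ (hv : avoidingDist G D u v = n) :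
    (layer G D u (n + 1)).bipartiteAbove (IsParent G D u) v = children G D u v := by
  ext w
  simp only [mem_bipartiteAbove, mem_children, and_iff_right_iff_imp]
  intro h
  simp [mem_layer, h.avoidingDist_eq, hv]

open scoped Classical in
lemma bipartiteBelow_innerLayer (hv : v ∈ layer G D u (n + 1)) :
    (innerLayer G D u n).bipartiteBelow (IsParent G D u) v = parents G D u v := by
  ext w
  simp only [mem_bipartiteBelow, mem_parents, and_iff_right_iff_imp]
  intro h
  rw [mem_layer] at hv
  exact mem_innerLayer.2 ⟨by simpa [h.avoidingDist_eq] using hv, h.1⟩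

end Search

section Weight

variable {G : SimpleGraph V} [G.LocallyFinite] {D : Finset V} {u : V}

/-- The search from `u` that stops at `D` is a finite tree in which every vertex outside `D` has
exactly two children. -/
structure IsFullBinarySearch (G : SimpleGraph V) [G.LocallyFinite] (D : Finset V) (u : V) :
    Prop where
  finite : {v | avoidingDist G D u v ≠ ⊤}.Finite
  card_children : ∀ v, avoidingDist G D u v ≠ ⊤ → v ∉ D → #(children G D u v) = 2
  card_parents : ∀ v, avoidingDist G D u v ≠ ⊤ → v ≠ u → #(parents G D u v) = 1

open scoped Classical in
lemma eventually_wblock_eq_sum_layer (G : SimpleGraph V) [G.LocallyFinite] (D : Finset V) (u : V) :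
    ∀ᶠ N in atTop,
      wblock G D u = 2 * ∑ n ∈ range N, #{v ∈ layer G D u n | v ∈ D} * (1 / 2 : ℝ) ^ n := by
  filter_upwards [eventually_avoidingDist_lt G D u D.finite_toSet] with N hN
  have card_leaves (n : ℕ) : {v ∈ layer G D u n | v ∈ D} = {v ∈ D | avoidingDist G D u v = n} := by
    ext v
    simp only [mem_filter, mem_layer, and_comm]
  calc wblock G D u
      = ∑ v ∈ D, 2 * ∑ n ∈ range N, if avoidingDist G D u v = n then (1 / 2 : ℝ) ^ n else 0 :=
        sum_congr rfl fun v hv ↦ by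
          rw [mdist_eq_avoidingDist hv, halfPow_eq_sum_range (hN v hv)]
    _ = 2 * ∑ n ∈ range N, #{v ∈ layer G D u n | v ∈ D} * (1 / 2 : ℝ) ^ n := by
        rw [← mul_sum, sum_comm]
        simp only [card_leaves, ← sum_filter, sum_const, nsmul_eq_mul]

lemma eventually_wblock_eq_sub_deficits (G : SimpleGraph V) [G.LocallyFinite] (D : Finset V)
    (u : V) :
    ∀ᶠ N in atTop, wblock G D u = 2 * (1 - #(layer G D u N) * (1 / 2 : ℝ) ^ N
      - ∑ n ∈ range N,
        (2 * #(innerLayer G D u n) - #(layer G D u (n + 1)) : ℝ) * (1 / 2) ^ (n + 1)) := by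
  classical
  have card_layer (n : ℕ) : (#(layer G D u n) : ℝ) =
      #{v ∈ layer G D u n | v ∈ D} + #(innerLayer G D u n) := by
    rw [innerLayer]
    exact_mod_cast (card_filter_add_card_filter_not (s := layer G D u n) (· ∈ D)).symm
  filter_upwards [eventually_wblock_eq_sum_layer G D u] with N hN
  have hkraft := kraft_identity (fun n ↦ #{v ∈ layer G D u n | v ∈ D})
    (fun n ↦ #(innerLayer G D u n)) N
  simp only [← card_layer] at hkraft
  rw [layer_zero, card_singleton, Nat.cast_one] at hkraft
  linear_combination hN + 2 * hkraft

lemma eventually_layer_eq_empty_iff :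
    (∀ᶠ n in atTop, layer G D u n = ∅) ↔ {v | avoidingDist G D u v ≠ ⊤}.Finite := by
  constructor
  · intro hempty
    obtain ⟨N, hN⟩ := eventually_atTop.1 hempty
    refine ((range N).finite_toSet.biUnion fun n _ ↦ (layer G D u n).finite_toSet).subset ?_
    intro v hv
    obtain ⟨n, hn⟩ := exists_mem_layer hv
    have hnN : n < N := by
      by_contra! hle
      simp [hN n hle] at hn
    exact Set.mem_biUnion (by simpa using hnN) hn
  · intro hfin
    filter_upwards [eventually_avoidingDist_lt G D u hfin] with n hn
    refine eq_empty_of_forall_notMem fun v hv ↦ ?_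
    have hv_top := avoidingDist_ne_top_of_mem_layer hv
    exact (hn v hv_top hv_top).ne (mem_layer.1 hv)

open scoped Classical in
lemma card_bipartiteAbove_le_two
    (h : ∀ v, avoidingDist G D u v ≠ ⊤ → v ∉ D → #(children G D u v) ≤ 2) (n : ℕ) :
    ∀ v ∈ innerLayer G D u n,
      #((layer G D u (n + 1)).bipartiteAbove (IsParent G D u) v) ≤ 2 := by
  intro v hv
  obtain ⟨hvn, hvD⟩ := mem_innerLayer.1 hv
  rw [bipartiteAbove_layer_succ hvn]
  exact h v (hvn.trans_ne (ENat.natCast_ne_top n)) hvD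

open scoped Classical in
lemma one_le_card_bipartiteBelow (n : ℕ) :
    ∀ v ∈ layer G D u (n + 1),
      1 ≤ #((innerLayer G D u n).bipartiteBelow (IsParent G D u) v) := by
  intro v hv
  rw [bipartiteBelow_innerLayer hv, Nat.one_le_iff_ne_zero, card_ne_zero]
  exact parents_nonempty (avoidingDist_ne_top_of_mem_layer hv) (ne_of_mem_layer_succ hv)

lemma card_layer_succ_le
    (h : ∀ v, avoidingDist G D u v ≠ ⊤ → v ∉ D → #(children G D u v) ≤ 2) (n : ℕ) :
    #(layer G D u (n + 1)) ≤ 2 * #(innerLayer G D u n) := by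
  classical
  simpa only [one_mul, mul_comm] using
    card_mul_le_card_mul' (IsParent G D u) (one_le_card_bipartiteBelow n)
      (card_bipartiteAbove_le_two h n)

lemma card_layer_succ_eq_iff
    (h : ∀ v, avoidingDist G D u v ≠ ⊤ → v ∉ D → #(children G D u v) ≤ 2) (n : ℕ) :
    #(layer G D u (n + 1)) = 2 * #(innerLayer G D u n) ↔
      (∀ v ∈ innerLayer G D u n, #(children G D u v) = 2) ∧
        ∀ v ∈ layer G D u (n + 1), #(parents G D u v) = 1 := by
  classical
  rw [← mul_one #(layer G D u (n + 1)), mul_comm 2, card_mul_eq_card_mul_iff_of_le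
    (card_bipartiteAbove_le_two h n) (one_le_card_bipartiteBelow n)]
  exact and_congr
    (forall₂_congr fun v hv ↦ by rw [bipartiteAbove_layer_succ (mem_innerLayer.1 hv).1])
    (forall₂_congr fun v hv ↦ by rw [bipartiteBelow_innerLayer hv])

lemma isFullBinarySearch_iff_card_layer
    (h : ∀ v, avoidingDist G D u v ≠ ⊤ → v ∉ D → #(children G D u v) ≤ 2) :
    IsFullBinarySearch G D u ↔ (∀ᶠ n in atTop, layer G D u n = ∅) ∧
      ∀ n, #(layer G D u (n + 1)) = 2 * #(innerLayer G D u n) := by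
  simp only [eventually_layer_eq_empty_iff, card_layer_succ_eq_iff h]
  constructor
  · rintro ⟨hfin, hchildren, hparents⟩
    refine ⟨hfin, fun n ↦ ⟨fun v hv ↦ ?_, fun v hv ↦ ?_⟩⟩
    · obtain ⟨hvn, hvD⟩ := mem_innerLayer.1 hv
      exact hchildren v (hvn.trans_ne (ENat.natCast_ne_top n)) hvD
    · exact hparents v (avoidingDist_ne_top_of_mem_layer hv) (ne_of_mem_layer_succ hv)
  · rintro ⟨hfin, hcard⟩
    refine ⟨hfin, fun v hv hvD ↦ ?_, fun v hv hvu ↦ ?_⟩ <;> obtain ⟨n, hn⟩ := exists_mem_layer hv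
    · exact (hcard n).1 v (mem_innerLayer.2 ⟨mem_layer.1 hn, hvD⟩)
    · cases n with
      | zero => exact absurd (by simpa [layer_zero] using hn) hvu
      | succ n => exact (hcard n).2 v hn

lemma deficit_nonneg
    (h : ∀ v, avoidingDist G D u v ≠ ⊤ → v ∉ D → #(children G D u v) ≤ 2) (n : ℕ) :
    0 ≤ (2 * #(innerLayer G D u n) - #(layer G D u (n + 1)) : ℝ) * (1 / 2) ^ (n + 1) :=
  mul_nonneg (sub_nonneg.2 (by exact_mod_cast card_layer_succ_le h n)) (by positivity)

theorem wblock_le_two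
    (h : ∀ v, avoidingDist G D u v ≠ ⊤ → v ∉ D → #(children G D u v) ≤ 2) :
    wblock G D u ≤ 2 := by
  obtain ⟨N, hN⟩ := (eventually_wblock_eq_sub_deficits G D u).exists
  have hlayer : 0 ≤ #(layer G D u N) * (1 / 2 : ℝ) ^ N := by positivity
  have hdeficits := sum_nonneg fun n (_ : n ∈ range N) ↦ deficit_nonneg h n
  linarith

theorem wblock_eq_two_iff
    (h : ∀ v, avoidingDist G D u v ≠ ⊤ → v ∉ D → #(children G D u v) ≤ 2) :
    wblock G D u = 2 ↔ IsFullBinarySearch G D u := by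
  have eventually_iff : ∀ᶠ N in atTop, wblock G D u = 2 ↔ layer G D u N = ∅ ∧
      ∀ n < N, #(layer G D u (n + 1)) = 2 * #(innerLayer G D u n) := by
    filter_upwards [eventually_wblock_eq_sub_deficits G D u] with N hN
    have hlayer : 0 ≤ #(layer G D u N) * (1 / 2 : ℝ) ^ N := by positivity
    have hdeficits := sum_nonneg fun n (_ : n ∈ range N) ↦ deficit_nonneg h n
    have hzero : wblock G D u = 2 ↔ #(layer G D u N) * (1 / 2 : ℝ) ^ N + ∑ n ∈ range N,
        (2 * #(innerLayer G D u n) - #(layer G D u (n + 1)) : ℝ) * (1 / 2) ^ (n + 1) = 0 := by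
      rw [hN]
      constructor <;> intro <;> linarith
    rw [hzero, add_eq_zero_iff_of_nonneg hlayer hdeficits,
      sum_eq_zero_iff_of_nonneg fun n _ ↦ deficit_nonneg h n]
    refine and_congr (by simp) (forall_congr' fun n ↦ ?_)
    rw [mem_range, mul_eq_zero_iff_right (by positivity), sub_eq_zero, eq_comm]
    exact_mod_cast Iff.rfl
  rw [isFullBinarySearch_iff_card_layer h]
  constructor
  · intro heq
    have hN := eventually_iff.mono fun N hN ↦ hN.1 heq
    refine ⟨hN.mono fun N ↦ And.left, fun n ↦ ?_⟩
    obtain ⟨N, hN, hnN⟩ := (hN.and (eventually_gt_atTop n)).exists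
    exact hN.2 n hnN
  · rintro ⟨hempty, hcard⟩
    obtain ⟨N, hN, hemptyN⟩ := (eventually_iff.and hempty).exists
    exact hN.2 ⟨hemptyN, fun n _ ↦ hcard n⟩

lemma isFullBinarySearch_of_isAcyclic (hG : G.IsAcyclic)
    (hfin : {v | avoidingDist G D u v ≠ ⊤}.Finite) (hu : u ∉ D → G.degree u = 2)
    (hdeg : ∀ v ∉ D, v ≠ u → G.degree v = 3) : IsFullBinarySearch G D u := by
  have card_parents (v : V) (hv : avoidingDist G D u v ≠ ⊤) (hvu : v ≠ u) :
      #(parents G D u v) = 1 := by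
    refine le_antisymm (card_le_one.2 fun x hx y hy ↦ ?_) (parents_nonempty hv hvu).card_pos
    rw [mem_parents] at hx hy
    exact subsingleton_adj_avoidingDist_le hG hv ⟨hx.2.1.symm, hx.2.2.le⟩
      ⟨hy.2.1.symm, hy.2.2.le⟩
  refine ⟨hfin, fun v hv hvD ↦ ?_, card_parents⟩
  have hcard := card_children_add_card_parents_eq_degree hG hv hvD
  by_cases hvu : v = u
  · subst hvu
    rwa [parents_self, card_empty, add_zero, hu hvD] at hcard
  · rw [card_parents v hv hvu, hdeg v hvD hvu] at hcard
    omega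

end Weight

section SearchTree

variable {G : SimpleGraph V} {D : Finset V} {u v : V}

/-- The subgraph traversed by the search from `u` that stops at `D`, with an edge for each pair of
a vertex and one of its parents. -/
def searchTree (G : SimpleGraph V) (D : Finset V) (u : V) : G.Subgraph where
  verts := {v | avoidingDist G D u v ≠ ⊤}
  Adj v w := IsParent G D u v w ∨ IsParent G D u w v
  adj_sub h := h.elim (·.2.1) (·.2.1.symm)
  edge_vert h := h.elim (·.avoidingDist_left_ne_top) (·.avoidingDist_right_ne_top)
  symm := ⟨fun _ _ ↦ Or.symm⟩

lemma mem_searchTree_verts : v ∈ (searchTree G D u).verts ↔ avoidingDist G D u v ≠ ⊤ := Iff.rfl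

lemma connected_searchTree : (searchTree G D u).coe.Connected := by
  refine connected_of_exists_adj_lt (fun v ↦ avoidingDist G D u v)
    ⟨u, by simp [mem_searchTree_verts, avoidingDist_self]⟩ fun v hv ↦ ?_
  obtain ⟨w, hw⟩ := exists_isParent v.2 fun h ↦ hv (Subtype.ext h)
  exact ⟨⟨w, hw.avoidingDist_left_ne_top⟩, Or.inr hw, hw.2.2⟩

variable [G.LocallyFinite]

lemma ncard_neighborSet_searchTree :
    ((searchTree G D u).neighborSet v).ncard = #(children G D u v) + #(parents G D u v) := by
  classical
  rw [← card_union_of_disjoint disjoint_children_parents, ← Set.ncard_coe_finset]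
  congr 1
  ext w
  simp [searchTree, mem_children, mem_parents]

lemma IsFullBinarySearch.isTree_searchTree (h : IsFullBinarySearch G D u) :
    (searchTree G D u).coe.IsTree := by
  refine ⟨connected_searchTree,
    isAcyclic_of_subsingleton_adj_le (fun v ↦ avoidingDist G D u v) fun v ↦ ?_⟩
  have isParent_of_le {w : (searchTree G D u).verts} (hvw : (searchTree G D u).coe.Adj v w)
      (hle : avoidingDist G D u w ≤ avoidingDist G D u v) : IsParent G D u w v :=
    hvw.resolve_left fun hvw ↦ hvw.2.2.not_ge hle
  intro w hw x hx
  have hwv := isParent_of_le hw.1 hw.2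
  have hvu : v ≠ u := by
    rintro hvu
    simpa [hvu, avoidingDist_self] using hwv.2.2
  exact Subtype.ext <| card_le_one.1 (h.card_parents v v.2 hvu).le _ (mem_parents.2 hwv) _
    (mem_parents.2 (isParent_of_le hx.1 hx.2))

lemma IsFullBinarySearch.isFullBinaryWitness (h : IsFullBinarySearch G D u) :
    IsFullBinaryWitness G D u := by
  have ncard_leaf {v : V} (hv : v ∈ D) :
      ((searchTree G D u).neighborSet v).ncard = #(parents G D u v) := by
    rw [ncard_neighborSet_searchTree, children_eq_empty hv, card_empty, zero_add]
  have ncard_inner {v : V} (hv : avoidingDist G D u v ≠ ⊤) (hvD : v ∉ D) :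
      ((searchTree G D u).neighborSet v).ncard = 2 + #(parents G D u v) := by
    rw [ncard_neighborSet_searchTree, h.card_children v hv hvD]
  have hu : avoidingDist G D u u ≠ ⊤ := by simp [avoidingDist_self]
  refine ⟨searchTree G D u, hu, h.finite, h.isTree_searchTree, ?_, fun v hv hvu ↦ ?_, ?_⟩
  · by_cases huD : u ∈ D
    · simp [ncard_leaf huD, parents_self]
    · simp [ncard_inner hu huD, parents_self]
  · by_cases hvD : v ∈ D
    · simp [ncard_leaf hvD, h.card_parents v hv hvu]
    · simp [ncard_inner hv hvD, h.card_parents v hv hvu]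
  · ext v
    rw [Set.mem_inter_iff, and_comm]
    refine and_congr_right fun hv ↦ ⟨fun hvD ↦ ?_, fun hleaf ↦ ?_⟩
    · rw [ncard_leaf hvD]
      refine ⟨?_, fun hvu ↦ by rw [hvu, parents_self, card_empty]⟩
      by_cases hvu : v = u
      · simp [hvu, parents_self]
      · exact (h.card_parents v hv hvu).le
    · by_contra hvD
      have hle := hleaf.1
      rw [ncard_inner hv hvD] at hle
      omega

end SearchTree

section Witness

variable {G : SimpleGraph V} {D : Finset V} {u : V}

lemma mdist_le_mdist_preimage {W : Type*} {H : SimpleGraph W} (f : H →g G)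
    (hf : Function.Injective f) (u v : W) :
    mdist G D (f u) (f v) ≤ mdist H (D.preimage f hf.injOn) u v := by
  refine le_sInf ?_
  rintro _ ⟨p, ⟨hp, hv, havoid⟩, rfl⟩
  refine sInf_le ⟨p.map f, ⟨hp.map hf, by simpa using hv, fun w hw hwD ↦ ?_⟩, by simp⟩
  rw [Walk.support_map, List.mem_map] at hw
  obtain ⟨x, hx, rfl⟩ := hw
  rw [havoid x hx (by simpa using hwD)]

lemma wblock_preimage_le {W : Type*} {H : SimpleGraph W} (f : H →g G)
    (hf : Function.Injective f) (u : W) :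
    wblock H (D.preimage f hf.injOn) u ≤ wblock G D (f u) := by
  classical
  calc wblock H (D.preimage f hf.injOn) u
      ≤ ∑ v ∈ D.preimage f hf.injOn, halfPow (mdist G D (f u) (f v)) :=
        sum_le_sum fun v _ ↦ halfPow_antitone (mdist_le_mdist_preimage f hf u v)
    _ = ∑ v ∈ D with v ∈ Set.range f, halfPow (mdist G D (f u) v) :=
        sum_preimage' f D hf.injOn fun v ↦ halfPow (mdist G D (f u) v)
    _ ≤ wblock G D (f u) :=
        sum_le_sum_of_subset_of_nonneg (filter_subset _ _) fun _ _ _ ↦ halfPow_nonneg _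

lemma IsFullBinaryWitness.two_le_wblock (h : IsFullBinaryWitness G D u) : 2 ≤ wblock G D u := by
  classical
  obtain ⟨H, hu, hfin, htree, hroot, hinner, hleaves⟩ := h
  have : Finite H.verts := hfin
  have : H.coe.LocallyFinite := fun v ↦ Fintype.ofFinite _
  have degree_eq (v : H.verts) : H.coe.degree v = (H.neighborSet v).ncard := by
    have : Fintype (H.neighborSet v) := Fintype.ofEquiv _ (Subgraph.coeNeighborSetEquiv v)
    rw [Subgraph.coe_degree, Set.ncard_eq_toFinset_card', H.finset_card_neighborSet_eq_degree]
  let D' : Finset H.verts := D.preimage H.hom H.hom_injective.injOn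
  have not_leaf {v : H.verts} (hv : v ∉ D') :
      ¬((H.neighborSet v).ncard ≤ 1 ∧ ((v : V) = u → (H.neighborSet v).ncard = 0)) := fun hleaf ↦
    hv (mem_preimage.2 (hleaves.ge ⟨v.2, hleaf⟩).1)
  have hfull : IsFullBinarySearch H.coe D' ⟨u, hu⟩ := by
    refine isFullBinarySearch_of_isAcyclic htree.isAcyclic (Set.toFinite _)
      (fun huD ↦ ?_) fun v hvD hvu ↦ ?_
    · rw [degree_eq]
      exact hroot.resolve_left fun hzero ↦ not_leaf huD ⟨by simp [hzero], fun _ ↦ hzero⟩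
    · have hvu : (v : V) ≠ u := fun h ↦ hvu (Subtype.ext h)
      rw [degree_eq]
      exact (hinner v v.2 hvu).resolve_left fun hone ↦
        not_leaf hvD ⟨hone.le, fun h ↦ absurd h hvu⟩
  rw [← (wblock_eq_two_iff fun v hv hvD ↦ (hfull.card_children v hv hvD).le).2 hfull]
  exact wblock_preimage_le H.hom H.hom_injective ⟨u, hu⟩

end Witness

theorem stmt_17_general {V : Type*} (G : SimpleGraph V) [G.LocallyFinite]
    (hsub : ∀ v, G.degree v ≤ 3) (D : Finset V) (u : V) (hu : G.degree u ≤ 2) :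
    wblock G D u ≤ 2 ∧ (wblock G D u = 2 ↔ IsFullBinaryWitness G D u) := by
  have hchildren (v : V) (hv : avoidingDist G D u v ≠ ⊤) (_ : v ∉ D) : #(children G D u v) ≤ 2 :=
    card_children_le_two hsub hu hv
  refine ⟨wblock_le_two hchildren, fun heq ↦ ?_, fun hwitness ↦ ?_⟩
  · exact ((wblock_eq_two_iff hchildren).1 heq).isFullBinaryWitness
  · exact (wblock_le_two hchildren).antisymm hwitness.two_le_wblock

/-- Lemma of Bessy et al.: if `G` is subcubic and `u` has degree at most 2, then
`w_{(G,D)}(u) ≤ 2`, with equality iff `u` lies in a full binary tree subgraph whose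
leaves are exactly the vertices of `D` in it. -/
theorem stmt_17 {V : Type*} [Fintype V] (G : SimpleGraph V) [DecidableRel G.Adj]
    (hsub : Subcubic G) (D : Finset V) (u : V) (hu : G.degree u ≤ 2) :
    wblock G D u ≤ 2 ∧ (wblock G D u = 2 ↔ IsFullBinaryWitness G D u) := 
  stmt_17_general G hsub D u hu
end
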